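/- The subspace of GL_4(F_2)-invariants of Q_9 is one-dimensional, spanned by the class of the polynomial q = x_1x_2x_3x_4^6 + x_1x_2x_3^6x_4 + x_1x_2^6x_3x_4 + x_1^3x_2x_3x_4^4 + x_1^3x_2x_3^4x_4 + x_1^3x_2^4x_3x_4. -/

import Mathlib

/-!
Common setup: the polynomial algebra `P_4 = F_2[x_1,x_2,x_3,x_4]` (variables `X 0, ..., X 3`),
the Steenrod action, hit polynomials, the cohit spaces `Q_n`, and the (induced) actions of
`GL_4(F_2)` and of the symmetric group `Σ_4` on `Q_n`.
-/

open MvPolynomial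

noncomputable section

abbrev kk : Type := ZMod 2
abbrev P4 : Type := MvPolynomial (Fin 4) kk

/-- The total Steenrod square: the algebra endomorphism of `P4` with `X i ↦ X i + (X i)^2`.
For `g` homogeneous of degree `d`, `Sq^t g` is the degree-`d+t` homogeneous component
of `sqTotal g`. -/
def sqTotal : P4 →ₐ[kk] P4 := aeval fun i => X i + X i ^ 2

/-- The homogeneous polynomials of degree `n`, i.e. `(P_4)_n`, as a submodule. -/
def homog (n : ℕ) : Submodule kk P4 := homogeneousSubmodule (Fin 4) kk n

/-- The subspace `H_n` of hit polynomials of degree `n`: it is spanned by the elements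
`Sq^{n-d}(g) = (sqTotal g)_n` for `g` homogeneous of degree `d < n`, i.e. by all
`∑_{t>0} Sq^t(f_t)` with `f_t ∈ (P_4)_{n-t}`. -/
def hitSub (n : ℕ) : Submodule kk P4 :=
  Submodule.span kk
    {p | ∃ d, d < n ∧ ∃ g ∈ homog d, p = homogeneousComponent n (sqTotal g)}

/-- The cohit space `Q_n = (P_4)_n / H_n`. -/
abbrev Qn (n : ℕ) :=
  ↥(homog n) ⧸ ((hitSub n).comap (homog n).subtype)

/-- Projection of a polynomial onto its degree-`n` part, landing in `homog n`. -/
def toHomog (n : ℕ) : P4 →ₗ[kk] homog n :=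
  (homogeneousComponent n).codRestrict (homog n) fun f => homogeneousComponent_mem n f

/-- The class in `Q_n` of (the degree-`n` component of) a polynomial.  For `f`
homogeneous of degree `n` this is the class `[f]` of `f`. -/
def Qmk (n : ℕ) : P4 →ₗ[kk] Qn n :=
  ((hitSub n).comap (homog n).subtype).mkQ.comp (toHomog n)

/-- Substitution action of a matrix `M`: the algebra endomorphism `X i ↦ ∑ j M i j • X j`. -/
def substM (M : Matrix (Fin 4) (Fin 4) kk) : P4 →ₐ[kk] P4 :=
  aeval fun i => ∑ j, M i j • X j

/-- The set of invertible `4 × 4` matrices over `F_2`, i.e. `GL_4(F_2)`. -/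
def glSet : Set (Matrix (Fin 4) (Fin 4) kk) := {M | IsUnit M}

/-- The set of permutation matrices, i.e. `Σ_4 ⊆ GL_4(F_2)`. -/
def permSet : Set (Matrix (Fin 4) (Fin 4) kk) :=
  {M | ∃ σ : Equiv.Perm (Fin 4), M = σ.toPEquiv.toMatrix}

/-- Homogeneous polynomials of degree `n` whose class in `Q_n` is invariant under every
element of `G` (the action on classes being induced by `substM`): for every `M ∈ G`,
`M·f - f` is hit. -/
def invPre (n : ℕ) (G : Set (Matrix (Fin 4) (Fin 4) kk)) : Submodule kk P4 :=
  homog n ⊓ ⨅ M ∈ G, (hitSub n).comap ((substM M).toLinearMap - LinearMap.id)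

/-- The subspace `(Q_n)^G` of `G`-invariant classes in `Q_n`. -/
def QInv (n : ℕ) (G : Set (Matrix (Fin 4) (Fin 4) kk)) : Submodule kk (Qn n) :=
  (invPre n G).map (Qmk n)

/-- The `Σ_4`-submodule of `Q_n` generated by the classes of the polynomials in `S`:
the span of the classes of all the permuted polynomials `σ · f`, `σ ∈ Σ_4`, `f ∈ S`. -/
def permSpan (n : ℕ) (S : Set P4) : Submodule kk (Qn n) :=
  Submodule.span kk
    {c | ∃ σ : Equiv.Perm (Fin 4), ∃ f ∈ S, c = Qmk n (rename (⇑σ) f)}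

/-- The invariant polynomial `q = x₁x₂x₃x₄⁶ + x₁x₂x₃⁶x₄ + x₁x₂⁶x₃x₄ + x₁³x₂x₃x₄⁴ +
x₁³x₂x₃⁴x₄ + x₁³x₂⁴x₃x₄` (with `x_i = X (i-1)`). -/
def q7 : P4 :=
  X 0 * X 1 * X 2 * X 3 ^ 6 + X 0 * X 1 * X 2 ^ 6 * X 3 + X 0 * X 1 ^ 6 * X 2 * X 3 +
    X 0 ^ 3 * X 1 * X 2 * X 3 ^ 4 + X 0 ^ 3 * X 1 * X 2 ^ 4 * X 3 +
    X 0 ^ 3 * X 1 ^ 4 * X 2 * X 3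

/-!
Every polynomial is uniquely a sum `∑_S x_S f_S²` over the sets `S` of variables. Using the Cartan
formula, a polynomial of degree nine is hit exactly when, modulo hit cubics, its components with
`|S| = 3` are `f_{iᶜ} ≡ x_i w` for a single quadratic form `w`; a cubic is hit exactly when it has
no terms `x_i x_j x_k` and the matrix of its coefficients at `x_c x_d²` is alternating.

Since `GL_4(F_2)` is generated by transvections, invariance becomes two statements about matrices.
The coefficients of an invariant class at `x_{iᶜ} x_{jᶜ}²` form a matrix that is
transvection-invariant modulo alternating matrices, hence is itself alternating, and a hit
polynomial removes it. What is left is a family of matrices `(m_i)`, taken modulo the families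
`(e_i vᵀ)` and alternating matrices; the only transvection-invariant ones are the multiples of the
family of matrix units `(E_{ii})`, which belongs to `∑_i x_{iᶜ} x_i⁶` and to `q`.
-/

section OddComponent

variable {σ : Type*}

/-- The squarefree monomial `x_S = ∏ i ∈ S, x_i`. -/
def squarefreeMonomial (S : Finset σ) : MvPolynomial σ kk := ∏ i ∈ S, X i

theorem squarefreeMonomial_eq_monomial (S : Finset σ) :
    squarefreeMonomial S = monomial (∑ i ∈ S, Finsupp.single i 1) 1 := by
  rw [monomial_sum_one]; rfl

variable [DecidableEq σ]

theorem X_mul_squarefreeMonomial_of_notMem {i : σ} {S : Finset σ} (hi : i ∉ S) :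
    X i * squarefreeMonomial S = squarefreeMonomial (insert i S) :=
  (Finset.prod_insert hi).symm

theorem X_mul_squarefreeMonomial_of_mem {i : σ} {S : Finset σ} (hi : i ∈ S) :
    X i * squarefreeMonomial S = squarefreeMonomial (S.erase i) * X i ^ 2 := by
  rw [squarefreeMonomial, ← Finset.mul_prod_erase _ _ hi, squarefreeMonomial]
  ring

variable [Fintype σ]

/-- The coefficient `f_S` in the unique expansion `f = ∑_S x_S f_S²` of a polynomial over `𝔽₂`;
`x^t` contributes `x^⌊t/2⌋` to the component indexed by the set of its odd exponents. -/
def oddComponent (S : Finset σ) : MvPolynomial σ kk →ₗ[kk] MvPolynomial σ kk :=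
  (basisMonomials σ kk).constr kk fun t =>
    if ({i | Odd (t i)} : Finset σ) = S then monomial (t.mapRange (· / 2) (Nat.zero_div 2)) 1 else 0

theorem oddComponent_monomial_one (S : Finset σ) (t : σ →₀ ℕ) :
    oddComponent S (monomial t 1) =
      if ({i | Odd (t i)} : Finset σ) = S
      then monomial (t.mapRange (· / 2) (Nat.zero_div 2)) 1 else 0 := by
  rw [← congr_fun (coe_basisMonomials σ kk) t]
  exact (basisMonomials σ kk).constr_basis kk _ t

theorem oddComponent_squarefreeMonomial_mul_sq (S T : Finset σ) (v : MvPolynomial σ kk) :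
    oddComponent S (squarefreeMonomial T * v ^ 2) = if T = S then v else 0 := by
  induction v using induction_on' with
  | monomial s c =>
    obtain rfl | rfl : c = 0 ∨ c = 1 := by decide +revert
    · simp
    · have odd_eq :
          ({i | Odd ((∑ i ∈ T, Finsupp.single i 1 + 2 • s : σ →₀ ℕ) i)} : Finset σ) = T := by
        ext j
        by_cases hj : j ∈ T <;> simp [Finsupp.single_apply, hj, Nat.odd_add]
      have half_eq : (∑ i ∈ T, Finsupp.single i 1 + 2 • s : σ →₀ ℕ).mapRange (· / 2)
          (Nat.zero_div 2) = s := by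
        ext j
        simp only [Finsupp.mapRange_apply, Finsupp.add_apply, Finsupp.finsetSum_apply,
          Finsupp.single_apply, Finset.sum_ite_eq', Finsupp.smul_apply]
        grind
      rw [squarefreeMonomial_eq_monomial, monomial_pow, monomial_mul, one_pow, one_mul,
        oddComponent_monomial_one, odd_eq, half_eq]
  | add p q hp hq =>
    rw [CharTwo.add_sq, mul_add, map_add, hp, hq, ← ite_add_zero]

theorem sum_squarefreeMonomial_mul_oddComponent_sq (f : MvPolynomial σ kk) :
    ∑ S, squarefreeMonomial S * oddComponent S f ^ 2 = f := by
  induction f using induction_on' with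
  | monomial t c =>
    obtain rfl | rfl : c = 0 ∨ c = 1 := by decide +revert
    · simp
    · have recombine : ∑ i ∈ ({i | Odd (t i)} : Finset σ), Finsupp.single i 1 +
          2 • t.mapRange (· / 2) (Nat.zero_div 2) = t := by
        ext j
        by_cases hj : Odd (t j) <;> simp [Finsupp.single_apply, hj] <;> grind
      simp [oddComponent_monomial_one, squarefreeMonomial_eq_monomial, monomial_pow, recombine]
  | add p q hp hq =>
    simp only [map_add, CharTwo.add_sq, mul_add, Finset.sum_add_distrib, hp, hq]

theorem oddComponent_mul_sq (S : Finset σ) (f u : MvPolynomial σ kk) :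
    oddComponent S (f * u ^ 2) = oddComponent S f * u := by
  conv_lhs => rw [← sum_squarefreeMonomial_mul_oddComponent_sq f]
  simp_rw [Finset.sum_mul, mul_assoc, ← mul_pow, map_sum, oddComponent_squarefreeMonomial_mul_sq]
  simp

theorem oddComponent_algHom (φ : MvPolynomial σ kk →ₐ[kk] MvPolynomial σ kk) (T : Finset σ)
    (f : MvPolynomial σ kk) :
    oddComponent T (φ f) =
      ∑ S, oddComponent T (φ (squarefreeMonomial S)) * φ (oddComponent S f) := by
  conv_lhs => rw [← sum_squarefreeMonomial_mul_oddComponent_sq f]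
  simp_rw [map_sum, map_mul, map_pow, oddComponent_mul_sq]

theorem oddComponent_squarefreeMonomial (S T : Finset σ) :
    oddComponent S (squarefreeMonomial T) = if T = S then 1 else 0 := by
  simpa using oddComponent_squarefreeMonomial_mul_sq S T 1

theorem oddComponent_X_mul (T : Finset σ) (i : σ) (f : MvPolynomial σ kk) :
    oddComponent T (X i * f) =
      if i ∈ T then oddComponent (T.erase i) f else X i * oddComponent (insert i T) f := by
  have component_sq (S : Finset σ) (v : MvPolynomial σ kk) :
      oddComponent T (X i * (squarefreeMonomial S * v ^ 2)) =
        if i ∈ S then if S.erase i = T then X i * v else 0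
        else if insert i S = T then v else 0 := by
    split_ifs with hi <;>
      simp_all [← mul_assoc, X_mul_squarefreeMonomial_of_mem, X_mul_squarefreeMonomial_of_notMem,
        oddComponent_mul_sq, oddComponent_squarefreeMonomial]
  conv_lhs => rw [← sum_squarefreeMonomial_mul_oddComponent_sq f]
  simp_rw [Finset.mul_sum, map_sum, component_sq]
  split_ifs with hi
  · rw [Finset.sum_eq_single_of_mem (T.erase i) (Finset.mem_univ _)] <;> grind
  · rw [Finset.sum_eq_single_of_mem (insert i T) (Finset.mem_univ _)] <;> grind

theorem oddComponent_homogeneousComponent (S : Finset σ) (m : ℕ) (f : MvPolynomial σ kk) :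
    oddComponent S (homogeneousComponent (S.card + 2 * m) f) =
      homogeneousComponent m (oddComponent S f) := by
  induction f using induction_on' with
  | monomial t c =>
    obtain rfl | rfl : c = 0 ∨ c = 1 := by decide +revert
    · simp
    · by_cases ht : ({i | Odd (t i)} : Finset σ) = S
      · have degree_eq : t.degree = S.card + 2 * (t.mapRange (· / 2) (Nat.zero_div 2)).degree := by
          simp only [Finsupp.degree_eq_sum, ← ht, Finset.card_filter, Finset.mul_sum,
            ← Finset.sum_add_distrib, Finsupp.mapRange_apply]
          exact Finset.sum_congr rfl fun i _ => by grind
        rw [homogeneousComponent_of_mem (isHomogeneous_monomial 1 degree_eq),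
          oddComponent_monomial_one, if_pos ht,
          homogeneousComponent_of_mem (isHomogeneous_monomial 1 rfl)]
        split_ifs <;> first | omega | simp [oddComponent_monomial_one, ht]
      · rw [homogeneousComponent_of_mem (isHomogeneous_monomial 1 rfl)]
        split_ifs <;> simp [oddComponent_monomial_one, ht]
  | add p q hp hq => simp only [map_add, hp, hq]

theorem oddComponent_mem_homogeneousSubmodule {S : Finset σ} {m : ℕ} {f : MvPolynomial σ kk}
    (hf : f ∈ homogeneousSubmodule σ kk (S.card + 2 * m)) :
    oddComponent S f ∈ homogeneousSubmodule σ kk m := by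
  rw [← homogeneousComponent_eq_self hf, oddComponent_homogeneousComponent]
  exact homogeneousComponent_mem m _

theorem oddComponent_eq_zero_of_mem_homogeneousSubmodule {S : Finset σ} {n : ℕ}
    {f : MvPolynomial σ kk} (hf : f ∈ homogeneousSubmodule σ kk n)
    (hn : ∀ m, S.card + 2 * m ≠ n) : oddComponent S f = 0 := by
  have component_eq_zero (m : ℕ) : homogeneousComponent m (oddComponent S f) = 0 := by
    rw [← oddComponent_homogeneousComponent, homogeneousComponent_of_mem hf, if_neg (hn m),
      map_zero]
  rw [← sum_homogeneousComponent (oddComponent S f)]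
  exact Finset.sum_eq_zero fun m _ => component_eq_zero m

end OddComponent

section HomogeneousComponent

variable {σ R : Type*} [CommSemiring R] {a n : ℕ} {u : MvPolynomial σ R}

theorem homogeneousComponent_add_mul_of_mem (hu : u ∈ homogeneousSubmodule σ R a)
    (f : MvPolynomial σ R) :
    homogeneousComponent (a + n) (u * f) = u * homogeneousComponent n f := by
  induction f using induction_on' with
  | monomial t c =>
    have hc : monomial t c ∈ homogeneousSubmodule σ R t.degree := isHomogeneous_monomial c rfl
    rw [homogeneousComponent_of_mem (hu.mul hc), homogeneousComponent_of_mem hc, mul_ite, mul_zero]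
    simp only [Nat.add_left_cancel_iff]
  | add p q hp hq => simp only [map_add, mul_add, hp, hq]

theorem homogeneousComponent_mul_eq_zero_of_lt (hu : u ∈ homogeneousSubmodule σ R a) (hn : n < a)
    (f : MvPolynomial σ R) : homogeneousComponent n (u * f) = 0 := by
  induction f using induction_on' with
  | monomial t c =>
    have hc : monomial t c ∈ homogeneousSubmodule σ R t.degree := isHomogeneous_monomial c rfl
    rw [homogeneousComponent_of_mem (hu.mul hc), if_neg (by omega)]
  | add p q hp hq => rw [mul_add, map_add, hp, hq, add_zero]

end HomogeneousComponent

section SteenrodSquare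

theorem sqTotal_of_mem_homog_one {l : P4} (hl : l ∈ homog 1) : sqTotal l = l + l ^ 2 := by
  rw [homog, homogeneousSubmodule_one_eq_span_X] at hl
  induction hl using Submodule.span_induction with
  | mem _ h => obtain ⟨i, rfl⟩ := h; exact aeval_X _ i
  | zero => simp
  | add p q _ _ hp hq => rw [map_add, hp, hq, CharTwo.add_sq]; ring
  | smul c p _ hp =>
    obtain rfl | rfl : c = 0 ∨ c = 1 := by decide +revert
    · simp
    · rwa [one_smul]

theorem homog_induction {motive : (d : ℕ) → P4 → Prop} (zero : ∀ d, motive d 0)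
    (one : motive 0 1)
    (add : ∀ d g h, motive d g → motive d h → motive d (g + h))
    (linear_mul : ∀ d l g, l ∈ homog 1 → motive d g → motive (d + 1) (l * g)) {d : ℕ} {g : P4}
    (hg : g ∈ homog d) : motive d g := by
  rw [homog, ← homogeneousSubmodule_one_pow] at hg
  induction hg using Submodule.pow_induction_on_left' with
  | algebraMap c =>
    obtain rfl | rfl : c = 0 ∨ c = 1 := by decide +revert
    · simpa using zero 0
    · simpa using one
  | add g h d _ _ hg hh => exact add d g h hg hh
  | mem_mul l hl d g _ hg => exact linear_mul d l g hl hg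

theorem homogeneousComponent_sqTotal_linear_mul {l : P4} (hl : l ∈ homog 1) (n : ℕ) (g : P4) :
    homogeneousComponent (n + 1) (sqTotal (l * g)) =
      l * (homogeneousComponent n (sqTotal g) + homogeneousComponent n (l * sqTotal g)) := by
  rw [map_mul, sqTotal_of_mem_homog_one hl, add_comm n,
    show (l + l ^ 2) * sqTotal g = l * (sqTotal g + l * sqTotal g) by ring,
    homogeneousComponent_add_mul_of_mem hl, map_add]

theorem homogeneousComponent_sqTotal_of_le {d : ℕ} {g : P4} (hg : g ∈ homog d) :
    ∀ n ≤ d, homogeneousComponent n (sqTotal g) = if n = d then g else 0 := by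
  refine homog_induction (motive := fun d g => ∀ n ≤ d, homogeneousComponent n (sqTotal g) =
    if n = d then g else 0) (by simp) ?one (fun d g h hg hh n hn => ?add)
    (fun d l g hl hg n hn => ?linear_mul) hg
  case one =>
    intro n _
    rw [map_one, homogeneousComponent_of_mem (isHomogeneous_one _ _)]
  case add => rw [map_add, map_add, hg n hn, hh n hn, ite_add_zero]
  case linear_mul =>
    obtain - | k := n
    · rw [map_mul, sqTotal_of_mem_homog_one hl, pow_two, ← mul_one_add, mul_assoc,
        homogeneousComponent_mul_eq_zero_of_lt hl zero_lt_one, if_neg (Nat.succ_ne_zero d).symm]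
    · have quadratic_part : homogeneousComponent k (l * sqTotal g) = 0 := by
        obtain - | j := k
        · exact homogeneousComponent_mul_eq_zero_of_lt hl zero_lt_one _
        · rw [add_comm, homogeneousComponent_add_mul_of_mem hl, hg j (by omega),
            if_neg (by omega), mul_zero]
      rw [homogeneousComponent_sqTotal_linear_mul hl, quadratic_part, add_zero, hg k (by omega),
        mul_ite, mul_zero]
      simp only [Nat.add_right_cancel_iff]

theorem homogeneousComponent_sqTotal_of_two_mul_le {d : ℕ} {g : P4} (hg : g ∈ homog d) :
    ∀ n ≥ 2 * d, homogeneousComponent n (sqTotal g) = if n = 2 * d then g ^ 2 else 0 := by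
  refine homog_induction (motive := fun d g => ∀ n ≥ 2 * d, homogeneousComponent n (sqTotal g) =
    if n = 2 * d then g ^ 2 else 0) (by simp) (fun n _ => ?one) (fun d g h hg hh n hn => ?add)
    (fun d l g hl hg n hn => ?linear_mul) hg
  case one => rw [map_one, homogeneousComponent_of_mem (isHomogeneous_one _ _), one_pow, mul_zero]
  case add => rw [map_add, map_add, hg n hn, hh n hn, CharTwo.add_sq, ite_add_zero]
  case linear_mul =>
    obtain ⟨k, rfl⟩ : ∃ k, n = k + 1 + 1 := ⟨n - 2, by omega⟩
    rw [homogeneousComponent_sqTotal_linear_mul hl, hg (k + 1) (by omega), if_neg (by omega),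
      add_comm k 1, homogeneousComponent_add_mul_of_mem hl, hg k (by omega)]
    split_ifs <;> first | omega | ring

theorem homogeneousComponent_sqTotal_self {d : ℕ} {g : P4} (hg : g ∈ homog d) :
    homogeneousComponent d (sqTotal g) = g := by
  simpa using homogeneousComponent_sqTotal_of_le hg d le_rfl

theorem homogeneousComponent_sqTotal_mem_hitSub {d n : ℕ} (hd : d < n) {g : P4}
    (hg : g ∈ homog d) : homogeneousComponent n (sqTotal g) ∈ hitSub n :=
  Submodule.subset_span ⟨d, hd, g, hg, rfl⟩

theorem hitSub_le_homog (n : ℕ) : hitSub n ≤ homog n :=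
  Submodule.span_le.2 fun _ ⟨_, _, _, _, h⟩ => h ▸ homogeneousComponent_mem n _

theorem homogeneousComponent_sqTotal_linear_pow_mul {x : P4} (hx : x ∈ homog 1) (y : P4)
    (k n : ℕ) :
    homogeneousComponent (2 ^ (k + 1) + n) (sqTotal (x ^ 2 ^ k * y)) =
      x ^ 2 ^ k * homogeneousComponent (2 ^ k + n) (sqTotal y) +
        x ^ 2 ^ (k + 1) * homogeneousComponent n (sqTotal y) := by
  have hx_pow (a : ℕ) : x ^ a ∈ homogeneousSubmodule (Fin 4) kk a := by
    simpa using IsHomogeneous.pow hx a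
  rw [map_mul, map_pow, sqTotal_of_mem_homog_one hx, add_pow_char_pow, ← pow_mul, ← pow_succ',
    add_mul, map_add, homogeneousComponent_add_mul_of_mem (hx_pow _),
    show 2 ^ (k + 1) + n = 2 ^ k + (2 ^ k + n) by ring,
    homogeneousComponent_add_mul_of_mem (hx_pow _)]

-- The identity behind this is `x y² = Sq⁴(x y) + Sq³(x² y) + Sq¹(x⁴ y)`, a telescoping sum.
theorem linear_mul_sq_mem_hitSub {x y : P4} (hx : x ∈ homog 1) (hy : y ∈ homog 4) :
    x * y ^ 2 ∈ hitSub 9 := by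
  have hit (k : ℕ) (hk : 2 ^ k + 4 < 9) :
      homogeneousComponent 9 (sqTotal (x ^ 2 ^ k * y)) ∈ hitSub 9 :=
    homogeneousComponent_sqTotal_mem_hitSub hk
      (IsHomogeneous.mul (by simpa using IsHomogeneous.pow hx (2 ^ k)) hy)
  have Sq4 := homogeneousComponent_sqTotal_linear_pow_mul hx y 0 7
  have Sq3 := homogeneousComponent_sqTotal_linear_pow_mul hx y 1 5
  have Sq1 := homogeneousComponent_sqTotal_linear_pow_mul hx y 2 1
  norm_num [homogeneousComponent_sqTotal_of_two_mul_le hy 8,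
    homogeneousComponent_sqTotal_of_le hy 1] at Sq4 Sq3 Sq1
  have decomposition : x * y ^ 2 = homogeneousComponent 9 (sqTotal (x ^ 2 ^ 0 * y)) +
      homogeneousComponent 9 (sqTotal (x ^ 2 ^ 1 * y)) +
      homogeneousComponent 9 (sqTotal (x ^ 2 ^ 2 * y)) := by
    norm_num [Sq4, Sq3, Sq1]
    grind [CharTwo.add_self_eq_zero]
  rw [decomposition]
  exact add_mem (add_mem (hit 0 (by simp)) (hit 1 (by simp))) (hit 2 (by simp))

end SteenrodSquare

section HitCriteria

theorem compl_singleton_ne_univ (i : Fin 4) : ({i}ᶜ : Finset (Fin 4)) ≠ .univ :=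
  (Finset.compl_ne_univ_iff_nonempty _).2 (Finset.singleton_nonempty i)

theorem card_compl_singleton (i : Fin 4) : ({i}ᶜ : Finset (Fin 4)).card = 3 := by
  decide +revert

theorem squarefreeMonomial_mem_homog (S : Finset (Fin 4)) :
    squarefreeMonomial S ∈ homog S.card := by
  have prod_mem := IsHomogeneous.prod S (X : Fin 4 → P4) (fun _ => 1) fun i _ =>
    isHomogeneous_X kk i
  rwa [← Finset.card_eq_sum_ones] at prod_mem

theorem sqTotal_squarefreeMonomial (S : Finset (Fin 4)) :
    sqTotal (squarefreeMonomial S) =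
      ∑ T ∈ S.powerset, squarefreeMonomial T * squarefreeMonomial (S \ T) ^ 2 := by
  simp [squarefreeMonomial, sqTotal, Finset.prod_add, Finset.prod_pow]

theorem oddComponent_sqTotal (T : Finset (Fin 4)) (f : P4) :
    oddComponent T (sqTotal f) =
      ∑ S with T ⊆ S, squarefreeMonomial (S \ T) * sqTotal (oddComponent S f) := by
  have squarefree_case (S : Finset (Fin 4)) : oddComponent T (sqTotal (squarefreeMonomial S)) =
      if T ⊆ S then squarefreeMonomial (S \ T) else 0 := by
    simp_rw [sqTotal_squarefreeMonomial, map_sum, oddComponent_squarefreeMonomial_mul_sq,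
      Finset.sum_ite_eq', Finset.mem_powerset]
  rw [oddComponent_algHom]
  simp_rw [squarefree_case, ite_mul, zero_mul, Finset.sum_filter]

theorem oddComponent_compl_singleton_sqTotal (i : Fin 4) (f : P4) :
    oddComponent {i}ᶜ (sqTotal f) =
      sqTotal (oddComponent {i}ᶜ f) + X i * sqTotal (oddComponent .univ f) := by
  have supersets : ({S | {i}ᶜ ⊆ S} : Finset (Finset (Fin 4))) = {{i}ᶜ, .univ} := by
    decide +revert
  rw [oddComponent_sqTotal, supersets, Finset.sum_pair (compl_singleton_ne_univ i), sdiff_self,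
    ← Finset.compl_eq_univ_sdiff, compl_compl]
  simp [squarefreeMonomial]

theorem oddComponent_compl_singleton_homogeneousComponent_sqTotal (i : Fin 4) (n : ℕ) (f : P4) :
    oddComponent {i}ᶜ (homogeneousComponent (2 * n + 5) (sqTotal f)) =
      homogeneousComponent (n + 1) (sqTotal (oddComponent {i}ᶜ f)) +
        X i * homogeneousComponent n (sqTotal (oddComponent .univ f)) := by
  rw [show 2 * n + 5 = ({i}ᶜ : Finset (Fin 4)).card + 2 * (n + 1) by
      rw [card_compl_singleton]; ring,
    oddComponent_homogeneousComponent, oddComponent_compl_singleton_sqTotal, map_add, add_comm n 1,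
    homogeneousComponent_add_mul_of_mem (isHomogeneous_X kk i)]

theorem sum_X_mul_oddComponent_singleton_sq {n : ℕ} (hn : Odd n) {f : P4} (hf : f ∈ homog n)
    (h : ∀ i, oddComponent {i}ᶜ f = 0) : ∑ c, X c * oddComponent {c} f ^ 2 = f := by
  have component_eq_zero (S : Finset (Fin 4)) (hS : S.card ≠ 1) : oddComponent S f = 0 := by
    by_cases card_eq_three : S.card = 3
    · obtain ⟨i, rfl⟩ : ∃ i, S = {i}ᶜ := by decide +revert
      exact h i
    · have card_le : S.card ≤ 4 := S.card_le_univ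
      exact oddComponent_eq_zero_of_mem_homogeneousSubmodule hf fun m => by grind
  conv_rhs => rw [← sum_squarefreeMonomial_mul_oddComponent_sq f]
  rw [← Finset.sum_subset (Finset.univ.map ⟨_, Finset.singleton_injective⟩).subset_univ]
  · simp [squarefreeMonomial]
  · intro S _ hS
    have hS_card : S.card ≠ 1 := fun hS_card => by
      obtain ⟨c, rfl⟩ := Finset.card_eq_one.1 hS_card
      simp at hS
    rw [component_eq_zero S hS_card, zero_pow two_ne_zero, mul_zero]

theorem mem_hitSub_nine_of_oddComponent_compl_singleton_eq_zero {p : P4} (hp : p ∈ homog 9)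
    (h : ∀ i, oddComponent {i}ᶜ p = 0) : p ∈ hitSub 9 := by
  rw [← sum_X_mul_oddComponent_singleton_sq (by decide) hp h]
  exact sum_mem fun c _ => linear_mul_sq_mem_hitSub (isHomogeneous_X kk c)
    (oddComponent_mem_homogeneousSubmodule hp)

theorem exists_oddComponent_sub_X_mul_mem_hitSub_of_mem_hitSub {p : P4} (hp : p ∈ hitSub 9) :
    ∃ w ∈ homog 2, ∀ i, oddComponent {i}ᶜ p - X i * w ∈ hitSub 3 := by
  induction hp using Submodule.span_induction with
  | mem _ hp =>
    obtain ⟨d, hd, g, hg, rfl⟩ := hp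
    refine ⟨homogeneousComponent 2 (sqTotal (oddComponent .univ g)),
      homogeneousComponent_mem 2 _, fun i => ?_⟩
    rw [oddComponent_compl_singleton_homogeneousComponent_sqTotal i 2, add_sub_cancel_right]
    by_cases hm : ∃ m, ({i}ᶜ : Finset (Fin 4)).card + 2 * m = d
    · obtain ⟨m, rfl⟩ := hm
      rw [card_compl_singleton] at hd
      exact homogeneousComponent_sqTotal_mem_hitSub (by omega)
        (oddComponent_mem_homogeneousSubmodule hg)
    · rw [oddComponent_eq_zero_of_mem_homogeneousSubmodule hg (not_exists.1 hm), map_zero, map_zero]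
      exact zero_mem _
  | zero => exact ⟨0, zero_mem _, by simp⟩
  | add p q _ _ hp hq =>
    obtain ⟨v, hv, hpv⟩ := hp
    obtain ⟨w, hw, hqw⟩ := hq
    refine ⟨v + w, add_mem hv hw, fun i => ?_⟩
    rw [map_add, mul_add, add_sub_add_comm]
    exact add_mem (hpv i) (hqw i)
  | smul c p _ hp =>
    obtain ⟨w, hw, hpw⟩ := hp
    refine ⟨c • w, Submodule.smul_mem _ c hw, fun i => ?_⟩
    rw [map_smul, mul_smul_comm, ← smul_sub]
    exact Submodule.smul_mem _ c (hpw i)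

theorem exists_mem_hitSub_oddComponent_eq_X_mul {w : P4} (hw : w ∈ homog 2) :
    ∃ p ∈ hitSub 9, ∀ i, oddComponent {i}ᶜ p = X i * w := by
  have hg : squarefreeMonomial .univ * w ^ 2 ∈ homog 8 :=
    IsHomogeneous.mul (m := 4) (squarefreeMonomial_mem_homog .univ) (IsHomogeneous.pow hw 2)
  refine ⟨_, homogeneousComponent_sqTotal_mem_hitSub (by norm_num) hg, fun i => ?_⟩
  rw [oddComponent_compl_singleton_homogeneousComponent_sqTotal i 2,
    oddComponent_squarefreeMonomial_mul_sq, oddComponent_squarefreeMonomial_mul_sq,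
    if_neg (compl_singleton_ne_univ i).symm, if_pos rfl, homogeneousComponent_sqTotal_self hw,
    map_zero, map_zero, zero_add]

theorem exists_mem_hitSub_oddComponent_eq_single (i : Fin 4) {h : P4} (hh : h ∈ hitSub 3) :
    ∃ p ∈ hitSub 9, ∀ j, oddComponent {j}ᶜ p = if i = j then h else 0 := by
  induction hh using Submodule.span_induction with
  | mem _ h =>
    obtain ⟨d, hd, g, hg, rfl⟩ := h
    have hG : squarefreeMonomial {i}ᶜ * g ^ 2 ∈ homog (3 + d * 2) :=
      IsHomogeneous.mul (card_compl_singleton i ▸ squarefreeMonomial_mem_homog {i}ᶜ)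
        (IsHomogeneous.pow hg 2)
    refine ⟨_, homogeneousComponent_sqTotal_mem_hitSub (by omega) hG, fun j => ?_⟩
    rw [oddComponent_compl_singleton_homogeneousComponent_sqTotal j 2,
      oddComponent_squarefreeMonomial_mul_sq, oddComponent_squarefreeMonomial_mul_sq,
      if_neg (compl_singleton_ne_univ i)]
    split_ifs <;> simp_all
  | zero => exact ⟨0, zero_mem _, by simp⟩
  | add g h _ _ hg hh =>
    obtain ⟨p, hp, hpg⟩ := hg
    obtain ⟨q, hq, hqh⟩ := hh
    exact ⟨p + q, add_mem hp hq, fun j => by rw [map_add, hpg, hqh, ite_add_zero]⟩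
  | smul c h _ hh =>
    obtain ⟨p, hp, hph⟩ := hh
    exact ⟨c • p, Submodule.smul_mem _ c hp, fun j => by rw [map_smul, hph, smul_ite, smul_zero]⟩

theorem mem_hitSub_nine_iff {p : P4} (hp : p ∈ homog 9) :
    p ∈ hitSub 9 ↔ ∃ w ∈ homog 2, ∀ i, oddComponent {i}ᶜ p - X i * w ∈ hitSub 3 := by
  refine ⟨exists_oddComponent_sub_X_mul_mem_hitSub_of_mem_hitSub, fun ⟨w, hw, hpw⟩ => ?_⟩
  obtain ⟨q, hq, hqw⟩ := exists_mem_hitSub_oddComponent_eq_X_mul hw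
  choose r hr hrp using fun i => exists_mem_hitSub_oddComponent_eq_single i (hpw i)
  have remainder_mem : p - (q + ∑ i, r i) ∈ hitSub 9 := by
    refine mem_hitSub_nine_of_oddComponent_compl_singleton_eq_zero
      (sub_mem hp (hitSub_le_homog 9 (add_mem hq (sum_mem fun i _ => hr i)))) fun j => ?_
    simp [hqw, hrp]
  rw [← sub_add_cancel p (q + ∑ i, r i)]
  exact add_mem remainder_mem (add_mem hq (sum_mem fun i _ => hr i))

end HitCriteria

section AlternatingMatrices

/-- The alternating matrices over a commutative ring; in characteristic two they are the symmetric
matrices with zero diagonal. -/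
def alternatingMatrices (ι R : Type*) [CommRing R] : Submodule R (Matrix ι ι R) where
  carrier := {A | (∀ i, A i i = 0) ∧ ∀ i j, A i j + A j i = 0}
  add_mem' {A B} hA hB := by
    refine ⟨fun i => ?_, fun i j => ?_⟩
    · rw [Matrix.add_apply, hA.1, hB.1, add_zero]
    · rw [Matrix.add_apply, Matrix.add_apply, add_add_add_comm, hA.2, hB.2, add_zero]
  zero_mem' := ⟨fun _ => rfl, fun _ _ => add_zero 0⟩
  smul_mem' c A hA := by
    refine ⟨fun i => ?_, fun i j => ?_⟩
    · rw [Matrix.smul_apply, hA.1, smul_zero]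
    · rw [Matrix.smul_apply, Matrix.smul_apply, ← smul_add, hA.2, smul_zero]

theorem vecMulVec_sub_vecMulVec_mem_alternatingMatrices {ι R : Type*} [CommRing R] (u v : ι → R) :
    Matrix.vecMulVec u v - Matrix.vecMulVec v u ∈ alternatingMatrices ι R := by
  refine ⟨fun i => ?_, fun i j => ?_⟩ <;>
    rw [Matrix.sub_apply, Matrix.vecMulVec_apply, Matrix.vecMulVec_apply]
  · ring
  · rw [Matrix.sub_apply, Matrix.vecMulVec_apply, Matrix.vecMulVec_apply]
    ring

end AlternatingMatrices

section LinearForms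

/-- The vector of coefficients of the variables in a polynomial. -/
def linearCoeff : P4 →ₗ[kk] Fin 4 → kk := LinearMap.pi fun i => lcoeff kk (Finsupp.single i 1)

theorem linearCoeff_X (i : Fin 4) : linearCoeff (X i) = Pi.single i 1 := by
  ext j
  simp [linearCoeff, coeff_X, Pi.single_apply, Finsupp.single_left_inj, eq_comm]

theorem sum_linearCoeff_smul_X {l : P4} (hl : l ∈ homog 1) : ∑ i, linearCoeff l i • X i = l := by
  rw [homog, homogeneousSubmodule_one_eq_span_X] at hl
  induction hl using Submodule.span_induction with
  | mem _ h => obtain ⟨i, rfl⟩ := h; simp [linearCoeff_X, Pi.single_apply]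
  | zero => simp
  | add p q _ _ hp hq => simp [add_smul, Finset.sum_add_distrib, hp, hq]
  | smul c p _ hp => simp [mul_smul, ← Finset.smul_sum, hp]

theorem oddComponent_singleton_X (c i : Fin 4) :
    oddComponent {c} (X i : P4) = if i = c then 1 else 0 := by
  simpa [squarefreeMonomial] using oddComponent_squarefreeMonomial {c} {i}

theorem oddComponent_singleton_of_mem_homog_one {l : P4} (hl : l ∈ homog 1) (c : Fin 4) :
    oddComponent {c} l = C (linearCoeff l c) := by
  conv_lhs => rw [← sum_linearCoeff_smul_X hl]
  simp_rw [map_sum, map_smul, oddComponent_singleton_X, smul_ite, smul_zero,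
    Finset.sum_ite_eq', Finset.mem_univ, if_pos, smul_eq_C_mul, mul_one]

end LinearForms

section DegreeThree

/-- The matrix of the coefficients of the monomials `x_c x_d²`. -/
def cubicMatrix : P4 →ₗ[kk] Matrix (Fin 4) (Fin 4) kk :=
  LinearMap.pi fun c => linearCoeff ∘ₗ oddComponent {c}

theorem cubicMatrix_apply (f : P4) (c : Fin 4) :
    cubicMatrix f c = linearCoeff (oddComponent {c} f) := rfl

theorem cubicMatrix_linear_mul_sq {l : P4} (hl : l ∈ homog 1) (m : P4) :
    cubicMatrix (l * m ^ 2) = Matrix.vecMulVec (linearCoeff l) (linearCoeff m) := by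
  ext c d
  rw [cubicMatrix_apply, oddComponent_mul_sq, oddComponent_singleton_of_mem_homog_one hl, C_mul',
    map_smul, Pi.smul_apply, smul_eq_mul, Matrix.vecMulVec_apply]

theorem oddComponent_compl_singleton_linear_mul_sq {l : P4} (hl : l ∈ homog 1) (m : P4)
    (i : Fin 4) : oddComponent {i}ᶜ (l * m ^ 2) = 0 := by
  rw [oddComponent_mul_sq, oddComponent_eq_zero_of_mem_homogeneousSubmodule hl fun _ => ?_,
    zero_mul]
  rw [card_compl_singleton]
  omega

theorem sum_cubicMatrix_smul {f : P4} (hf : f ∈ homog 3) (h : ∀ i, oddComponent {i}ᶜ f = 0) :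
    ∑ c, ∑ d, cubicMatrix f c d • (X c * X d ^ 2) = f := by
  have square_eq (c : Fin 4) :
      oddComponent {c} f ^ 2 = ∑ d, cubicMatrix f c d • X d ^ 2 := by
    have hlin : oddComponent {c} f ∈ homog 1 := oddComponent_mem_homogeneousSubmodule hf
    conv_lhs => rw [← sum_linearCoeff_smul_X hlin, CharTwo.sum_sq]
    exact Finset.sum_congr rfl fun d _ => by
      rw [smul_pow, ZMod.pow_card, cubicMatrix_apply]
  conv_rhs => rw [← sum_X_mul_oddComponent_singleton_sq (by decide) hf h]
  simp_rw [square_eq, Finset.mul_sum, mul_smul_comm]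

theorem homogeneousComponent_three_sqTotal_linear_mul_linear {l m : P4} (hl : l ∈ homog 1)
    (hm : m ∈ homog 1) : homogeneousComponent 3 (sqTotal (l * m)) = l * m ^ 2 + m * l ^ 2 := by
  rw [homogeneousComponent_sqTotal_linear_mul hl 2,
    homogeneousComponent_sqTotal_of_two_mul_le hm 2 le_rfl, if_pos rfl,
    homogeneousComponent_add_mul_of_mem (n := 1) hl, homogeneousComponent_sqTotal_self hm]
  ring

theorem mem_hitSub_three_of_cubicMatrix_mem {f : P4} (hf : f ∈ homog 3)
    (h : ∀ i, oddComponent {i}ᶜ f = 0) (hA : cubicMatrix f ∈ alternatingMatrices (Fin 4) kk) :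
    f ∈ hitSub 3 := by
  have symmetrization_mem (c d : Fin 4) : X c * X d ^ 2 + X d * X c ^ 2 ∈ hitSub 3 := by
    rw [← homogeneousComponent_three_sqTotal_linear_mul_linear (isHomogeneous_X kk c)
      (isHomogeneous_X kk d)]
    exact homogeneousComponent_sqTotal_mem_hitSub (by norm_num)
      (IsHomogeneous.mul (isHomogeneous_X kk c) (isHomogeneous_X kk d))
  rw [← sum_cubicMatrix_smul hf h, ← Fintype.sum_prod_type', ← Submodule.Quotient.mk_eq_zero,
    ← Submodule.mkQ_apply, map_sum]
  refine Finset.sum_involution (fun cd _ => cd.swap) (fun ⟨c, d⟩ _ => ?pair_cancels)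
    (fun ⟨c, d⟩ _ => ?diagonal_vanishes) (fun _ _ => Finset.mem_univ _) fun cd _ => cd.swap_swap
  case pair_cancels =>
    have symm : cubicMatrix f d c = cubicMatrix f c d :=
      (CharTwo.add_eq_zero.1 (hA.2 c d)).symm
    rw [Prod.fst_swap, Prod.snd_swap, symm, ← map_add, ← smul_add, map_smul, Submodule.mkQ_apply,
      (Submodule.Quotient.mk_eq_zero _).2 (symmetrization_mem c d), smul_zero]
  case diagonal_vanishes =>
    rintro ne_zero swap_eq
    obtain rfl : d = c := congrArg Prod.fst swap_eq
    exact ne_zero (by rw [hA.1, zero_smul, map_zero])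

theorem hitSub_three_le :
    hitSub 3 ≤ (⨅ i, LinearMap.ker (oddComponent {i}ᶜ)) ⊓
      (alternatingMatrices (Fin 4) kk).comap cubicMatrix := by
  refine Submodule.span_le.2 ?_
  rintro _ ⟨d, hd, g, hg, rfl⟩
  obtain hd | rfl : d ≤ 1 ∨ d = 2 := by omega
  · rw [homogeneousComponent_sqTotal_of_two_mul_le hg 3 (by omega), if_neg (by omega)]
    exact zero_mem _
  rw [homog, ← homogeneousSubmodule_one_pow, pow_two] at hg
  induction hg using Submodule.mul_induction_on' with
  | mem_mul_mem l hl m hm =>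
    rw [homogeneousComponent_three_sqTotal_linear_mul_linear hl hm]
    refine ⟨?_, ?_⟩
    · simp [oddComponent_compl_singleton_linear_mul_sq hl,
        oddComponent_compl_singleton_linear_mul_sq hm]
    · rw [SetLike.mem_coe, Submodule.mem_comap, map_add, cubicMatrix_linear_mul_sq hl,
        cubicMatrix_linear_mul_sq hm, ← CharTwo.sub_eq_add]
      exact vecMulVec_sub_vecMulVec_mem_alternatingMatrices _ _
  | add g _ h _ hg hh =>
    rw [map_add, map_add]
    exact add_mem hg hh

theorem mem_hitSub_three_iff {f : P4} (hf : f ∈ homog 3) :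
    f ∈ hitSub 3 ↔
      (∀ i, oddComponent {i}ᶜ f = 0) ∧ cubicMatrix f ∈ alternatingMatrices (Fin 4) kk := by
  refine ⟨fun h => ?_, fun ⟨h, hA⟩ => mem_hitSub_three_of_cubicMatrix_mem hf h hA⟩
  simpa using hitSub_three_le h

end DegreeThree

theorem exists_ne_ne_ne {ι : Type*} [Fintype ι] (hι : 3 < Fintype.card ι) (i j k : ι) :
    ∃ l, l ≠ i ∧ l ≠ j ∧ l ≠ k := by
  classical
  obtain ⟨l, -, hl⟩ := Finset.exists_mem_notMem_of_card_lt_card (t := .univ)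
    (Finset.card_le_three (a := i) (b := j) (c := k) |>.trans_lt hι)
  exact ⟨l, by simpa using hl⟩

section MatrixInvariants

open Matrix

variable {ι R : Type*} [CommRing R]

theorem mem_alternatingMatrices_iff_of_charTwo [CharP R 2] {A : Matrix ι ι R} :
    A ∈ alternatingMatrices ι R ↔ (∀ i, A i i = 0) ∧ ∀ i j, A i j = A j i :=
  and_congr_right fun _ => forall₂_congr fun _ _ => CharTwo.add_eq_zero

variable [DecidableEq ι]

/-- The families of matrices `(mᵢ)` for which there is a vector `v` such that every matrix
`mᵢ - eᵢ vᵀ` is alternating. For the family `cubicFamily p` of a polynomial `p` of degree nine with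
`tripleMatrix p = 0`, this means that `p` is hit. -/
def IsHitFamily (m : ι → Matrix ι ι R) : Prop :=
  ∃ v : ι → R, ∀ i, m i - vecMulVec (Pi.single i 1) v ∈ alternatingMatrices ι R

theorem isHitFamily_iff [CharP R 2] {m : ι → Matrix ι ι R} :
    IsHitFamily m ↔ ∃ v : ι → R, (∀ i, m i i i = v i) ∧ (∀ i j, j ≠ i → m i j j = 0) ∧
      (∀ i j, j ≠ i → m i i j + m i j i = v j) ∧
        ∀ i j k, j ≠ i → k ≠ i → m i j k = m i k j := by
  simp only [IsHitFamily, mem_alternatingMatrices_iff_of_charTwo, Matrix.sub_apply,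
    vecMulVec_apply, Pi.single_apply]
  refine exists_congr fun v => ⟨fun h => ⟨?_, ?_, ?_, ?_⟩, fun h i => ⟨?_, ?_⟩⟩ <;> grind

theorem not_isHitFamily_single [CharP R 2] [Nontrivial ι] [Nontrivial R] :
    ¬ IsHitFamily fun i : ι => single i i (1 : R) := by
  rintro h
  obtain ⟨v, hdiag, -, hcross, -⟩ := isHitFamily_iff.1 h
  obtain ⟨i, j, hij⟩ := exists_pair_ne ι
  simpa [← hcross i j hij.symm, hij, hij.symm] using hdiag j

theorem transpose_transvection (a b : ι) (c : R) :
    (transvection a b c)ᵀ = transvection b a c := by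
  rw [transvection, transvection, transpose_add, transpose_one, transpose_single]

variable [Fintype ι]

theorem transpose_transvection_mul_mul_transvection_apply (a b : ι) (A : Matrix ι ι R) (i j : ι) :
    ((transvection a b 1)ᵀ * A * transvection a b 1 : Matrix ι ι R) i j =
      A i j + (if i = b then A a j else 0) + (if j = b then A i a else 0) +
        if i = b ∧ j = b then A a a else 0 := by
  have transvection_mul_apply (B : Matrix ι ι R) (i j : ι) :
      (transvection b a 1 * B : Matrix ι ι R) i j = B i j + if i = b then B a j else 0 := by
    by_cases hi : i = b <;> simp [hi, transvection_mul_apply_of_ne]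
  have mul_transvection_apply (B : Matrix ι ι R) (i j : ι) :
      (B * transvection a b 1 : Matrix ι ι R) i j = B i j + if j = b then B i a else 0 := by
    by_cases hj : j = b <;> simp [hj, mul_transvection_apply_of_ne]
  rw [transpose_transvection, mul_transvection_apply, transvection_mul_apply,
    transvection_mul_apply]
  grind

/-- The effect of the substitution `X a ↦ X a + X b` on families of matrices in characteristic
two. -/
def transvectFamily (a b : ι) (m : ι → Matrix ι ι R) (i : ι) : Matrix ι ι R :=
  (transvection a b 1)ᵀ * (m i + if i = a then m b else 0) * transvection a b 1

theorem transvectFamily_sub_apply (a b i j k : ι) (m : ι → Matrix ι ι R) :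
    (transvectFamily a b m - m) i j k =
      (if i = a then m b j k else 0) +
      (if j = b then m i a k + (if i = a then m b a k else 0) else 0) +
      (if k = b then m i j a + (if i = a then m b j a else 0) else 0) +
        if j = b ∧ k = b then m i a a + (if i = a then m b a a else 0) else 0 := by
  rw [Pi.sub_apply, Matrix.sub_apply, transvectFamily,
    transpose_transvection_mul_mul_transvection_apply]
  split_ifs <;> simp <;> ring

variable [CharP R 2]

theorem mem_alternatingMatrices_of_forall_transvection (hι : 2 < Fintype.card ι)
    {A : Matrix ι ι R}
    (hA : ∀ a b, a ≠ b →
      (transvection a b 1)ᵀ * A * transvection a b 1 - A ∈ alternatingMatrices ι R) :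
    A ∈ alternatingMatrices ι R := by
  simp only [mem_alternatingMatrices_iff_of_charTwo, Matrix.sub_apply,
    transpose_transvection_mul_mul_transvection_apply] at hA ⊢
  have symm (i j : ι) : A i j = A j i := by
    obtain ⟨b, -, hb⟩ := Finset.exists_mem_notMem_of_card_lt_card (t := .univ)
      (Finset.card_le_two (a := i) (b := j) |>.trans_lt hι)
    simp only [Finset.mem_insert, Finset.mem_singleton, not_or] at hb
    simpa [hb.1, hb.2, Ne.symm hb.1, Ne.symm hb.2] using (hA i b (Ne.symm hb.1)).2 b j
  refine ⟨fun i => ?_, symm⟩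
  obtain ⟨b, -, hb⟩ := Finset.exists_mem_notMem_of_card_lt_card (s := {i}) (t := .univ)
    ((Finset.card_singleton i).trans_lt (by rw [Finset.card_univ]; omega))
  have hbi : b ≠ i := by simpa using hb
  have diag_eq := (hA i b hbi.symm).1 b
  have symm_eq := symm b i
  grind

section TransvectionInvariantFamilies

variable {m : ι → Matrix ι ι R}

theorem apply_comm_of_isHitFamily_transvectFamily_sub (hι : 3 < Fintype.card ι)
    (hm : ∀ a b, a ≠ b → IsHitFamily (transvectFamily a b m - m)) {i j k : ι} (hj : j ≠ i)
    (hk : k ≠ i) : m i j k = m i k j := by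
  obtain ⟨b, hbi, hbj, hbk⟩ := exists_ne_ne_ne hι i j k
  obtain ⟨v, -, -, -, h⟩ := isHitFamily_iff.1 (hm j b hbj.symm)
  simp only [transvectFamily_sub_apply] at h
  simpa [hbk.symm, hbj.symm, hj.symm] using h i b k hbi hk

theorem apply_self_eq_zero_of_isHitFamily_transvectFamily_sub (hι : 3 < Fintype.card ι)
    (hm : ∀ a b, a ≠ b → IsHitFamily (transvectFamily a b m - m)) {i j : ι} (hj : j ≠ i) :
    m i j j = 0 := by
  obtain ⟨b, hbi, hbj, -⟩ := exists_ne_ne_ne hι i j j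
  obtain ⟨v, -, h, -, -⟩ := isHitFamily_iff.1 (hm j b hbj.symm)
  simp only [transvectFamily_sub_apply] at h
  have symm : m i j b = m i b j := apply_comm_of_isHitFamily_transvectFamily_sub hι hm hj hbi
  simpa [hbj, hj.symm, symm, CharTwo.add_self_eq_zero] using h i b hbi

theorem exists_add_eq_of_isHitFamily_transvectFamily_sub (hι : 3 < Fintype.card ι)
    (hm : ∀ a b, a ≠ b → IsHitFamily (transvectFamily a b m - m)) (a : ι) :
    ∃ c, ∀ i, a ≠ i → m i i a + m i a i = c := by
  obtain ⟨i₀, hi₀⟩ := Fintype.exists_ne_of_one_lt_card (by omega) a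
  refine ⟨m i₀ i₀ a + m i₀ a i₀, fun i hi => ?_⟩
  obtain ⟨b, hba, hbi, hbi₀⟩ := exists_ne_ne_ne hι a i i₀
  obtain ⟨v, -, -, h, -⟩ := isHitFamily_iff.1 (hm a b hba.symm)
  simp only [transvectFamily_sub_apply] at h
  have h_i := h i b hbi
  have h_i₀ := h i₀ b hbi₀
  grind

theorem exists_isHitFamily_sub_smul_single (hι : 3 < Fintype.card ι)
    (hm : ∀ a b, a ≠ b → IsHitFamily (transvectFamily a b m - m)) :
    ∃ d : R, IsHitFamily fun i => m i - d • single i i 1 := by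
  have apply_self_eq_zero {i j : ι} : j ≠ i → m i j j = 0 :=
    apply_self_eq_zero_of_isHitFamily_transvectFamily_sub hι hm
  choose c hc using exists_add_eq_of_isHitFamily_transvectFamily_sub hι hm
  have diag_add_eq (a b : ι) : m a a a + c a = m b b b + c b := by
    obtain rfl | hab := eq_or_ne a b
    · rfl
    obtain ⟨v, -, h, -, -⟩ := isHitFamily_iff.1 (hm a b hab)
    simp only [transvectFamily_sub_apply] at h
    have h_ab := h a b hab.symm
    have hc_b := hc b a hab.symm
    have hc_a := hc a b hab
    have diag_eq_zero := apply_self_eq_zero hab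
    grind
  obtain ⟨i₀⟩ : Nonempty ι := Fintype.card_pos_iff.1 (by omega)
  refine ⟨m i₀ i₀ i₀ + c i₀, isHitFamily_iff.2 ⟨c, fun i => ?_, fun i j hj => ?_, fun i j hj => ?_,
    fun i j k hj hk => ?_⟩⟩
  · simp [diag_add_eq i₀ i, CharTwo.neg_eq]
  · simp [apply_self_eq_zero hj, hj.symm]
  · simp [hc j i hj, hj.symm]
  · simp [apply_comm_of_isHitFamily_transvectFamily_sub hι hm hj hk, hj.symm, hk.symm]

end TransvectionInvariantFamilies

theorem isHitFamily_transvectFamily_single_sub {a b : ι} (hab : a ≠ b) :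
    IsHitFamily (transvectFamily a b (fun i => single i i (1 : R)) - fun i => single i i 1) := by
  refine isHitFamily_iff.2 ⟨0, ?_⟩
  simp only [transvectFamily_sub_apply, single_apply, Pi.zero_apply]
  refine ⟨?_, ?_, ?_, ?_⟩ <;> grind

end MatrixInvariants

section LinearSubstitutions

theorem sum_smul_X_mem_homog_one (v : Fin 4 → kk) : ∑ j, v j • (X j : P4) ∈ homog 1 :=
  sum_mem fun j _ => Submodule.smul_mem _ _ (isHomogeneous_X kk j)

theorem substM_mem_homog (M : Matrix (Fin 4) (Fin 4) kk) {n : ℕ} {f : P4} (hf : f ∈ homog n) :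
    substM M f ∈ homog n := by
  have aeval_mem := IsHomogeneous.aeval hf (fun i => ∑ j, M i j • (X j : P4)) fun i =>
    sum_smul_X_mem_homog_one (M i)
  rwa [one_mul] at aeval_mem

theorem substM_homogeneousComponent (M : Matrix (Fin 4) (Fin 4) kk) (n : ℕ) (f : P4) :
    substM M (homogeneousComponent n f) = homogeneousComponent n (substM M f) := by
  induction f using induction_on' with
  | monomial s c =>
    have hs : monomial s c ∈ homogeneousSubmodule (Fin 4) kk s.degree :=
      isHomogeneous_monomial c rfl
    rw [homogeneousComponent_of_mem hs, homogeneousComponent_of_mem (substM_mem_homog M hs),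
      apply_ite (substM M), map_zero]
  | add p q hp hq => simp only [map_add, hp, hq]

theorem substM_sqTotal (M : Matrix (Fin 4) (Fin 4) kk) (f : P4) :
    substM M (sqTotal f) = sqTotal (substM M f) := by
  have comp_eq : (substM M).comp sqTotal = sqTotal.comp (substM M) := by
    refine algHom_ext fun i => ?_
    simp [substM, sqTotal, Finset.sum_add_distrib, CharTwo.sum_sq, smul_pow, ZMod.pow_card]
  exact AlgHom.congr_fun comp_eq f

theorem substM_mem_hitSub (M : Matrix (Fin 4) (Fin 4) kk) {n : ℕ} {f : P4} (hf : f ∈ hitSub n) :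
    substM M f ∈ hitSub n := by
  have hitSub_le : hitSub n ≤ (hitSub n).comap (substM M).toLinearMap := by
    refine Submodule.span_le.2 ?_
    rintro _ ⟨d, hd, g, hg, rfl⟩
    rw [SetLike.mem_coe, Submodule.mem_comap, AlgHom.toLinearMap_apply,
      substM_homogeneousComponent, substM_sqTotal]
    exact homogeneousComponent_sqTotal_mem_hitSub hd (substM_mem_homog M hg)
  exact hitSub_le hf

theorem substM_mul (M N : Matrix (Fin 4) (Fin 4) kk) :
    substM (M * N) = (substM N).comp (substM M) := by
  refine algHom_ext fun i => ?_
  simp only [substM, aeval_X, AlgHom.comp_apply, map_sum, map_smul, Matrix.mul_apply,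
    Finset.sum_smul, Finset.smul_sum, smul_smul]
  rw [Finset.sum_comm]

theorem substM_one : substM 1 = AlgHom.id kk P4 := by
  refine algHom_ext fun i => ?_
  simp [substM, Matrix.one_apply]

theorem substM_sub_mem_hitSub_of_forall_transvection {n : ℕ} {f : P4}
    (hf : ∀ a b, a ≠ b → substM (Matrix.transvection a b 1) f - f ∈ hitSub n)
    {M : Matrix (Fin 4) (Fin 4) kk} (hM : IsUnit M) : substM M f - f ∈ hitSub n := by
  have eq_one_of_ne_zero : ∀ c : kk, c ≠ 0 → c = 1 := by decide
  refine Matrix.diagonal_transvection_induction_of_det_ne_zero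
    (fun M => substM M f - f ∈ hitSub n) M (M.isUnit_iff_isUnit_det.1 hM).ne_zero
    (fun D hD => ?diagonal) (fun t => ?transvection) fun A B _ _ hA hB => ?mul
  case diagonal =>
    have diagonal_eq_one : Matrix.diagonal D = 1 := by
      rw [Matrix.det_diagonal, Finset.prod_ne_zero_iff] at hD
      simp [funext fun i => eq_one_of_ne_zero (D i) (hD i (Finset.mem_univ i))]
    rw [diagonal_eq_one, substM_one, AlgHom.id_apply, sub_self]
    exact zero_mem _
  case transvection =>
    obtain ⟨a, b, hab, c⟩ := t
    rw [Matrix.TransvectionStruct.toMatrix_mk]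
    obtain rfl | hc := eq_or_ne c 0
    · rw [Matrix.transvection_zero, substM_one, AlgHom.id_apply, sub_self]
      exact zero_mem _
    · rw [eq_one_of_ne_zero c hc]
      exact hf a b hab
  case mul =>
    rw [substM_mul, AlgHom.comp_apply, ← sub_add_sub_cancel _ (substM B f), ← map_sub]
    exact add_mem (substM_mem_hitSub B hA) hB

theorem linearCoeff_substM (M : Matrix (Fin 4) (Fin 4) kk) {l : P4} (hl : l ∈ homog 1) :
    linearCoeff (substM M l) = Matrix.vecMul (linearCoeff l) M := by
  conv_lhs => rw [← sum_linearCoeff_smul_X hl]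
  ext j
  simp [substM, linearCoeff_X, Matrix.vecMul, dotProduct, Pi.single_apply]

theorem cubicMatrix_substM (M : Matrix (Fin 4) (Fin 4) kk) {f : P4} (hf : f ∈ homog 3)
    (h : ∀ i, oddComponent {i}ᶜ f = 0) :
    cubicMatrix (substM M f) = M.transpose * cubicMatrix f * M := by
  have linear_mul_sq {l m : P4} (hl : l ∈ homog 1) (hm : m ∈ homog 1) :
      cubicMatrix (substM M (l * m ^ 2)) = M.transpose * cubicMatrix (l * m ^ 2) * M := by
    rw [map_mul, map_pow, cubicMatrix_linear_mul_sq (substM_mem_homog M hl),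
      cubicMatrix_linear_mul_sq hl, linearCoeff_substM M hl, linearCoeff_substM M hm,
      Matrix.mul_vecMulVec, Matrix.vecMulVec_mul, Matrix.mulVec_transpose]
  rw [← sum_X_mul_oddComponent_singleton_sq (by decide) hf h]
  simp_rw [map_sum, Matrix.mul_sum, Matrix.sum_mul]
  exact Finset.sum_congr rfl fun c _ => linear_mul_sq (isHomogeneous_X kk c)
    (oddComponent_mem_homogeneousSubmodule hf)

end LinearSubstitutions

section Transvections

open Matrix

theorem substM_transvection_X (a b i : Fin 4) :
    substM (transvection a b 1) (X i) = X i + if i = a then X b else 0 := by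
  simp [substM, transvection, Matrix.add_apply, add_smul, Finset.sum_add_distrib,
    Matrix.one_apply, single_apply, ite_and, eq_comm]

theorem substM_transvection_squarefreeMonomial (a b : Fin 4) (S : Finset (Fin 4)) :
    substM (transvection a b 1) (squarefreeMonomial S) =
      squarefreeMonomial S + if a ∈ S then X b * squarefreeMonomial (S.erase a) else 0 := by
  simp_rw [squarefreeMonomial, map_prod, substM_transvection_X]
  split_ifs with ha
  · have prod_erase : ∏ i ∈ S.erase a, (X i + if i = a then X b else 0) =
        ∏ i ∈ S.erase a, (X i : P4) :=
      Finset.prod_congr rfl fun i hi => by simp [Finset.ne_of_mem_erase hi]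
    rw [← Finset.mul_prod_erase S _ ha, ← Finset.mul_prod_erase S X ha, if_pos rfl, add_mul,
      prod_erase]
  · rw [add_zero]
    exact Finset.prod_congr rfl fun i hi => by simp [ne_of_mem_of_not_mem hi ha]

theorem oddComponent_compl_singleton_substM_transvection_squarefreeMonomial {a b : Fin 4}
    (hab : a ≠ b) (i : Fin 4) (S : Finset (Fin 4)) :
    oddComponent {i}ᶜ (substM (transvection a b 1) (squarefreeMonomial S)) =
      (if S = {i}ᶜ then 1 else 0) + if S = {b}ᶜ then if i = a then 1 else 0 else 0 := by
  rw [substM_transvection_squarefreeMonomial, map_add, oddComponent_squarefreeMonomial]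
  congr 1
  by_cases ha : a ∈ S
  · have univ_ne : S.erase a ≠ .univ := fun h => Finset.notMem_erase a S (h ▸ Finset.mem_univ a)
    have insert_eq (hb : b ∉ ({i}ᶜ : Finset (Fin 4))) : insert b {i}ᶜ = Finset.univ := by
      decide +revert
    have erase_eq_iff : (b ∈ ({i}ᶜ : Finset (Fin 4)) ∧ S.erase a = ({i}ᶜ : Finset _).erase b) ↔
        S = {b}ᶜ ∧ i = a := by
      decide +revert
    rw [if_pos ha, oddComponent_X_mul, oddComponent_squarefreeMonomial,
      oddComponent_squarefreeMonomial]
    simp only [← ite_and, ← erase_eq_iff]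
    grind
  · have ne_compl : S ≠ {b}ᶜ := by
      rintro rfl
      simp [hab] at ha
    rw [if_neg ha, if_neg ne_compl, map_zero]

theorem oddComponent_compl_singleton_substM_transvection {a b : Fin 4} (hab : a ≠ b) (i : Fin 4)
    (p : P4) :
    oddComponent {i}ᶜ (substM (transvection a b 1) p) =
      substM (transvection a b 1)
        (oddComponent {i}ᶜ p + if i = a then oddComponent {b}ᶜ p else 0) := by
  simp_rw [oddComponent_algHom _ {i}ᶜ p,
    oddComponent_compl_singleton_substM_transvection_squarefreeMonomial hab, add_mul, ite_mul,
    one_mul, zero_mul, Finset.sum_add_distrib, Finset.sum_ite_eq', Finset.mem_univ, if_true,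
    map_add, apply_ite (substM _), map_zero]

end Transvections

section DegreeNine

open Matrix

/-- The matrix of the coefficients of the monomials `x_{iᶜ} x_{jᶜ}²`, where `x_{iᶜ}` is the product
of the variables other than `X i`. -/
def tripleMatrix : P4 →ₗ[kk] Matrix (Fin 4) (Fin 4) kk :=
  LinearMap.pi fun i => LinearMap.pi fun j => lcoeff kk 0 ∘ₗ oddComponent {j}ᶜ ∘ₗ oddComponent {i}ᶜ

/-- The family of matrices whose `i`-th member holds the coefficients of the monomials
`x_{iᶜ} x_c² x_d⁴`. -/
def cubicFamily : P4 →ₗ[kk] Fin 4 → Matrix (Fin 4) (Fin 4) kk :=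
  LinearMap.pi fun i => cubicMatrix ∘ₗ oddComponent {i}ᶜ

theorem tripleMatrix_apply (p : P4) (i j : Fin 4) :
    tripleMatrix p i j = coeff 0 (oddComponent {j}ᶜ (oddComponent {i}ᶜ p)) := rfl

theorem cubicFamily_apply (p : P4) (i : Fin 4) :
    cubicFamily p i = cubicMatrix (oddComponent {i}ᶜ p) := rfl

theorem oddComponent_compl_singleton_mem_homog {p : P4} (hp : p ∈ homog 9) (i : Fin 4) :
    oddComponent {i}ᶜ p ∈ homog 3 :=
  oddComponent_mem_homogeneousSubmodule (by rwa [card_compl_singleton])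

theorem C_tripleMatrix {p : P4} (hp : p ∈ homog 9) (i j : Fin 4) :
    C (tripleMatrix p i j) = oddComponent {j}ᶜ (oddComponent {i}ᶜ p) := by
  have mem_homog_zero : oddComponent {j}ᶜ (oddComponent {i}ᶜ p) ∈ homog 0 :=
    oddComponent_mem_homogeneousSubmodule
      (by rw [card_compl_singleton]; exact oddComponent_compl_singleton_mem_homog hp i)
  rw [tripleMatrix_apply, ← homogeneousComponent_zero]
  exact homogeneousComponent_eq_self mem_homog_zero

theorem oddComponent_oddComponent_compl_singleton_eq_zero {p : P4} (hp : p ∈ homog 9)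
    (hΛ : tripleMatrix p = 0) (i j : Fin 4) : oddComponent {j}ᶜ (oddComponent {i}ᶜ p) = 0 := by
  rw [← C_tripleMatrix hp, hΛ, Matrix.zero_apply, map_zero]

theorem oddComponent_compl_singleton_X_mul (i j : Fin 4) (w : P4) :
    oddComponent {j}ᶜ (X i * w) =
      if i = j then X i * oddComponent .univ w else oddComponent {i, j}ᶜ w := by
  rw [oddComponent_X_mul]
  obtain rfl | hij := eq_or_ne i j
  · simp
  · rw [if_pos (by simpa using hij), if_neg hij]
    congr 2
    decide +revert

theorem coeff_zero_oddComponent_compl_singleton_X_mul (i j : Fin 4) (w : P4) :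
    coeff 0 (oddComponent {j}ᶜ (X i * w)) =
      if i = j then 0 else coeff 0 (oddComponent {i, j}ᶜ w) := by
  rw [oddComponent_compl_singleton_X_mul, apply_ite (coeff 0)]
  simp [coeff_X_mul']

theorem tripleMatrix_mem_alternatingMatrices {p : P4} (hp : p ∈ hitSub 9) :
    tripleMatrix p ∈ alternatingMatrices (Fin 4) kk := by
  obtain ⟨w, -, hpw⟩ := (mem_hitSub_nine_iff (hitSub_le_homog 9 hp)).1 hp
  have apply_eq (i j : Fin 4) : tripleMatrix p i j =
      if i = j then 0 else coeff 0 (oddComponent {i, j}ᶜ w) := by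
    have component_eq : oddComponent {j}ᶜ (oddComponent {i}ᶜ p - X i * w) = 0 := by
      simpa using (Submodule.mem_iInf _).1 (hitSub_three_le (hpw i)).1 j
    rw [map_sub, sub_eq_zero] at component_eq
    rw [tripleMatrix_apply, component_eq, coeff_zero_oddComponent_compl_singleton_X_mul]
  refine mem_alternatingMatrices_iff_of_charTwo.2 ⟨fun i => by simp [apply_eq], fun i j => ?_⟩
  simp only [apply_eq, Finset.pair_comm j i, eq_comm]

theorem oddComponent_compl_pair_squarefreeMonomial_compl_pair {i l j k : Fin 4} (hil : i < l)
    (hjk : j < k) : oddComponent {i, l}ᶜ (squarefreeMonomial {j, k}ᶜ) =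
      if j = i ∧ k = l then 1 else 0 := by
  have compl_pair_eq_iff : ({j, k}ᶜ : Finset (Fin 4)) = {i, l}ᶜ ↔ j = i ∧ k = l := by
    decide +revert
  simp only [oddComponent_squarefreeMonomial, compl_pair_eq_iff]

theorem exists_mem_homog_two_oddComponent_compl_pair_eq (A : Matrix (Fin 4) (Fin 4) kk) :
    ∃ w ∈ homog 2, ∀ i l, i < l → oddComponent {i, l}ᶜ w = C (A i l) := by
  refine ⟨∑ jk : Fin 4 × Fin 4 with jk.1 < jk.2, A jk.1 jk.2 • squarefreeMonomial {jk.1, jk.2}ᶜ,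
    sum_mem fun ⟨j, k⟩ hjk => ?_, fun i l hil => ?_⟩
  · have card_eq : ({j, k}ᶜ : Finset (Fin 4)).card = 2 := by
      rw [Finset.card_compl, Finset.card_pair (Finset.mem_filter.1 hjk).2.ne, Fintype.card_fin]
    have monomial_mem := squarefreeMonomial_mem_homog {j, k}ᶜ
    rw [card_eq] at monomial_mem
    exact Submodule.smul_mem _ _ monomial_mem
  · rw [map_sum, Finset.sum_eq_single_of_mem (i, l) (by simpa using hil)]
    · rw [map_smul, oddComponent_squarefreeMonomial, if_pos rfl, smul_eq_C_mul, mul_one]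
    · rintro ⟨j, k⟩ hjk hne
      rw [map_smul, oddComponent_compl_pair_squarefreeMonomial_compl_pair hil
        (Finset.mem_filter.1 hjk).2, if_neg (by simpa using hne), smul_zero]

theorem exists_mem_hitSub_tripleMatrix_eq {A : Matrix (Fin 4) (Fin 4) kk}
    (hA : A ∈ alternatingMatrices (Fin 4) kk) : ∃ p ∈ hitSub 9, tripleMatrix p = A := by
  obtain ⟨w, hw, hwA⟩ := exists_mem_homog_two_oddComponent_compl_pair_eq A
  obtain ⟨p, hp, hpw⟩ := exists_mem_hitSub_oddComponent_eq_X_mul hw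
  have apply_of_lt {i l : Fin 4} (hil : i < l) : tripleMatrix p i l = A i l := by
    rw [tripleMatrix_apply, hpw, coeff_zero_oddComponent_compl_singleton_X_mul, if_neg hil.ne,
      hwA i l hil, coeff_zero_C]
  obtain ⟨p_diag, p_symm⟩ :=
    mem_alternatingMatrices_iff_of_charTwo.1 (tripleMatrix_mem_alternatingMatrices hp)
  obtain ⟨A_diag, A_symm⟩ := mem_alternatingMatrices_iff_of_charTwo.1 hA
  refine ⟨p, hp, ext fun i l => ?_⟩
  obtain hil | rfl | hli := lt_trichotomy i l
  · exact apply_of_lt hil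
  · rw [p_diag, A_diag]
  · rw [p_symm, A_symm, apply_of_lt hli]

theorem eq_oddComponent_empty_sq {w : P4} (hw : w ∈ homog 2)
    (h : ∀ i j, i ≠ j → oddComponent {i, j}ᶜ w = 0) : w = oddComponent ∅ w ^ 2 := by
  conv_lhs => rw [← sum_squarefreeMonomial_mul_oddComponent_sq w]
  rw [Finset.sum_eq_single_of_mem ∅ (Finset.mem_univ _)]
  · simp [squarefreeMonomial]
  intro S _ hS
  have component_eq_zero : oddComponent S w = 0 := by
    by_cases card_eq_two : S.card = 2
    · obtain ⟨i, j, hij, rfl⟩ : ∃ i j, i ≠ j ∧ S = {i, j}ᶜ := by decide +revert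
      exact h i j hij
    · have card_pos := Finset.card_pos.2 (Finset.nonempty_iff_ne_empty.2 hS)
      exact oddComponent_eq_zero_of_mem_homogeneousSubmodule hw fun m => by omega
  rw [component_eq_zero, zero_pow two_ne_zero, mul_zero]

theorem mem_hitSub_nine_iff_isHitFamily {p : P4} (hp : p ∈ homog 9) (hΛ : tripleMatrix p = 0) :
    p ∈ hitSub 9 ↔ IsHitFamily (cubicFamily p) := by
  have component_eq_zero := oddComponent_oddComponent_compl_singleton_eq_zero hp hΛ
  have sub_mem_iff {u : P4} (hu : u ∈ homog 1) (i : Fin 4) :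
      oddComponent {i}ᶜ p - X i * u ^ 2 ∈ hitSub 3 ↔
        cubicFamily p i - vecMulVec (Pi.single i 1) (linearCoeff u) ∈
          alternatingMatrices (Fin 4) kk := by
    have hX : (X i : P4) ∈ homog 1 := isHomogeneous_X kk i
    rw [mem_hitSub_three_iff (sub_mem (oddComponent_compl_singleton_mem_homog hp i)
      (IsHomogeneous.mul hX (IsHomogeneous.pow hu 2))), map_sub, cubicMatrix_linear_mul_sq hX,
      linearCoeff_X, cubicFamily_apply]
    simp [component_eq_zero, oddComponent_compl_singleton_linear_mul_sq hX]
  rw [mem_hitSub_nine_iff hp]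
  constructor
  · rintro ⟨w, hw, hpw⟩
    have w_eq : w = oddComponent ∅ w ^ 2 := eq_oddComponent_empty_sq hw fun i j hij => by
      simpa [component_eq_zero, oddComponent_compl_singleton_X_mul, hij] using
        (Submodule.mem_iInf _).1 (hitSub_three_le (hpw i)).1 j
    rw [w_eq] at hpw
    exact ⟨_, fun i => (sub_mem_iff (oddComponent_mem_homogeneousSubmodule hw) i).1 (hpw i)⟩
  · rintro ⟨v, hv⟩
    have linearCoeff_eq : linearCoeff (∑ j, v j • X j) = v := by
      ext j
      simp [linearCoeff_X, Pi.single_apply]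
    refine ⟨(∑ j, v j • X j) ^ 2, IsHomogeneous.pow (sum_smul_X_mem_homog_one v) 2, fun i => ?_⟩
    rw [sub_mem_iff (sum_smul_X_mem_homog_one v), linearCoeff_eq]
    exact hv i

end DegreeNine

section Invariants

open Matrix

theorem coeff_zero_substM (M : Matrix (Fin 4) (Fin 4) kk) (f : P4) :
    coeff 0 (substM M f) = coeff 0 f := by
  have component_eq := substM_homogeneousComponent M 0 f
  rw [homogeneousComponent_zero, homogeneousComponent_zero, algHom_C, algebraMap_eq]
    at component_eq
  exact (C_injective _ _ component_eq).symm

theorem tripleMatrix_substM_transvection {a b : Fin 4} (hab : a ≠ b) (p : P4) :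
    tripleMatrix (substM (transvection a b 1) p) =
      (transvection b a 1)ᵀ * tripleMatrix p * transvection b a 1 := by
  ext i j
  rw [transpose_transvection_mul_mul_transvection_apply]
  simp only [tripleMatrix_apply, oddComponent_compl_singleton_substM_transvection hab,
    coeff_zero_substM, map_add, coeff_add, apply_ite (oddComponent _), apply_ite (coeff 0),
    map_zero, coeff_zero]
  grind

theorem cubicFamily_substM_transvection {a b : Fin 4} (hab : a ≠ b) {p : P4} (hp : p ∈ homog 9)
    (hΛ : tripleMatrix p = 0) :
    cubicFamily (substM (transvection a b 1) p) = transvectFamily a b (cubicFamily p) := by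
  have component_eq_zero := oddComponent_oddComponent_compl_singleton_eq_zero hp hΛ
  have hp₃ := oddComponent_compl_singleton_mem_homog hp
  ext1 i
  rw [cubicFamily_apply, oddComponent_compl_singleton_substM_transvection hab, cubicMatrix_substM,
    map_add, apply_ite cubicMatrix, map_zero]
  · rfl
  · split_ifs
    · exact add_mem (hp₃ i) (hp₃ b)
    · exact add_mem (hp₃ i) (zero_mem _)
  · intro j
    split_ifs <;> simp [component_eq_zero]

/-- The symmetric representative `∑ᵢ x_{iᶜ} xᵢ⁶` of the invariant class. -/
def symmetricNonic : P4 := ∑ i, squarefreeMonomial {i}ᶜ * X i ^ 6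

theorem squarefreeMonomial_compl_singleton_mul_sq_mem_homog (i : Fin 4) {f : P4}
    (hf : f ∈ homog 3) : squarefreeMonomial {i}ᶜ * f ^ 2 ∈ homog 9 :=
  IsHomogeneous.mul (card_compl_singleton i ▸ squarefreeMonomial_mem_homog {i}ᶜ)
    (IsHomogeneous.pow hf 2)

theorem oddComponent_sum_squarefreeMonomial_compl_singleton_mul_sq (f : Fin 4 → P4) (i : Fin 4) :
    oddComponent {i}ᶜ (∑ j, squarefreeMonomial {j}ᶜ * f j ^ 2) = f i := by
  simp [oddComponent_squarefreeMonomial_mul_sq]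

theorem symmetricNonic_eq_sum :
    symmetricNonic = ∑ i, squarefreeMonomial {i}ᶜ * (X i * X i ^ 2) ^ 2 :=
  Finset.sum_congr rfl fun i _ => by ring

theorem q7_eq_sum :
    q7 = ∑ i, squarefreeMonomial {i}ᶜ * ((X i + X 0) * X i ^ 2) ^ 2 := by
  have compl_eq : ({0}ᶜ : Finset (Fin 4)) = {1, 2, 3} ∧ ({1}ᶜ : Finset (Fin 4)) = {0, 2, 3} ∧
      ({2}ᶜ : Finset (Fin 4)) = {0, 1, 3} ∧ ({3}ᶜ : Finset (Fin 4)) = {0, 1, 2} := by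
    decide
  simp only [q7, squarefreeMonomial, mul_pow, CharTwo.add_sq, Fin.sum_univ_four, compl_eq,
    Fin.isValue, Fin.reduceEq, Finset.mem_insert, Finset.mem_singleton, or_self, not_false_eq_true,
    Finset.prod_insert, Finset.prod_singleton, CharTwo.add_self_eq_zero, zero_mul, mul_zero,
    zero_add, zero_ne_one]
  ring

theorem X_add_X_mem_homog_one (i j : Fin 4) : (X i + X j : P4) ∈ homog 1 :=
  add_mem (isHomogeneous_X kk i) (isHomogeneous_X kk j)

theorem symmetricNonic_mem_homog : symmetricNonic ∈ homog 9 := by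
  rw [symmetricNonic_eq_sum]
  exact sum_mem fun i _ => squarefreeMonomial_compl_singleton_mul_sq_mem_homog i
    (IsHomogeneous.mul (isHomogeneous_X kk i) (isHomogeneous_X_pow i 2))

theorem q7_mem_homog : q7 ∈ homog 9 := by
  rw [q7_eq_sum]
  exact sum_mem fun i _ => squarefreeMonomial_compl_singleton_mul_sq_mem_homog i
    (IsHomogeneous.mul (X_add_X_mem_homog_one i 0) (isHomogeneous_X_pow i 2))

theorem tripleMatrix_sum_squarefreeMonomial_compl_singleton_mul_sq {l : Fin 4 → P4}
    (hl : ∀ i, l i ∈ homog 1) (u : Fin 4 → P4) :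
    tripleMatrix (∑ j, squarefreeMonomial {j}ᶜ * (l j * u j ^ 2) ^ 2) = 0 := by
  ext i j
  rw [tripleMatrix_apply, oddComponent_sum_squarefreeMonomial_compl_singleton_mul_sq,
    oddComponent_compl_singleton_linear_mul_sq (hl i), coeff_zero, Matrix.zero_apply]

theorem cubicFamily_sum_squarefreeMonomial_compl_singleton_mul_sq {l : Fin 4 → P4}
    (hl : ∀ i, l i ∈ homog 1) (u : Fin 4 → P4) (i : Fin 4) :
    cubicFamily (∑ j, squarefreeMonomial {j}ᶜ * (l j * u j ^ 2) ^ 2) i =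
      vecMulVec (linearCoeff (l i)) (linearCoeff (u i)) := by
  rw [cubicFamily_apply, oddComponent_sum_squarefreeMonomial_compl_singleton_mul_sq,
    cubicMatrix_linear_mul_sq (hl i)]

theorem tripleMatrix_symmetricNonic : tripleMatrix symmetricNonic = 0 := by
  rw [symmetricNonic_eq_sum]
  exact tripleMatrix_sum_squarefreeMonomial_compl_singleton_mul_sq (isHomogeneous_X kk) X

theorem cubicFamily_symmetricNonic (i : Fin 4) :
    cubicFamily symmetricNonic i = single i i 1 := by
  rw [symmetricNonic_eq_sum, cubicFamily_sum_squarefreeMonomial_compl_singleton_mul_sq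
    (isHomogeneous_X kk), linearCoeff_X, ← single_eq_single_vecMulVec_single]

theorem symmetricNonic_notMem_hitSub : symmetricNonic ∉ hitSub 9 := by
  rw [mem_hitSub_nine_iff_isHitFamily symmetricNonic_mem_homog tripleMatrix_symmetricNonic,
    funext cubicFamily_symmetricNonic]
  exact not_isHitFamily_single

theorem q7_sub_symmetricNonic_mem_hitSub : q7 - symmetricNonic ∈ hitSub 9 := by
  have tripleMatrix_q7 : tripleMatrix q7 = 0 := by
    rw [q7_eq_sum]
    exact tripleMatrix_sum_squarefreeMonomial_compl_singleton_mul_sq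
      (fun i => X_add_X_mem_homog_one i 0) X
  rw [mem_hitSub_nine_iff_isHitFamily (sub_mem q7_mem_homog symmetricNonic_mem_homog)
    (by rw [map_sub, tripleMatrix_q7, tripleMatrix_symmetricNonic, sub_zero]), map_sub]
  refine ⟨Pi.single 0 1, fun i => ?_⟩
  rw [Pi.sub_apply, cubicFamily_symmetricNonic, q7_eq_sum,
    cubicFamily_sum_squarefreeMonomial_compl_singleton_mul_sq fun i => X_add_X_mem_homog_one i 0,
    map_add, linearCoeff_X, linearCoeff_X, single_eq_single_vecMulVec_single, add_vecMulVec,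
    add_sub_cancel_left]
  exact vecMulVec_sub_vecMulVec_mem_alternatingMatrices _ _

theorem substM_transvection_sub_mem_hitSub_iff {a b : Fin 4} (hab : a ≠ b) {p : P4}
    (hp : p ∈ homog 9) (hΛ : tripleMatrix p = 0) :
    substM (transvection a b 1) p - p ∈ hitSub 9 ↔
      IsHitFamily (transvectFamily a b (cubicFamily p) - cubicFamily p) := by
  rw [mem_hitSub_nine_iff_isHitFamily (sub_mem (substM_mem_homog _ hp) hp)
    (by simp [tripleMatrix_substM_transvection hab, hΛ]), map_sub,
    cubicFamily_substM_transvection hab hp hΛ]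

theorem substM_symmetricNonic_sub_mem_hitSub {M : Matrix (Fin 4) (Fin 4) kk} (hM : IsUnit M) :
    substM M symmetricNonic - symmetricNonic ∈ hitSub 9 := by
  refine substM_sub_mem_hitSub_of_forall_transvection (fun a b hab => ?_) hM
  rw [substM_transvection_sub_mem_hitSub_iff hab symmetricNonic_mem_homog
    tripleMatrix_symmetricNonic, funext cubicFamily_symmetricNonic]
  exact isHitFamily_transvectFamily_single_sub hab

theorem substM_sub_mem_hitSub_of_sub_mem_hitSub {M : Matrix (Fin 4) (Fin 4) kk} {n : ℕ} {f g : P4}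
    (hfg : f - g ∈ hitSub n) (hg : substM M g - g ∈ hitSub n) : substM M f - f ∈ hitSub n := by
  have difference_mem : (substM M f - f) - (substM M g - g) ∈ hitSub n := by
    rw [sub_sub_sub_comm, ← map_sub]
    exact sub_mem (substM_mem_hitSub M hfg) hfg
  exact (Submodule.sub_mem_iff_left _ hg).1 difference_mem

theorem tripleMatrix_mem_alternatingMatrices_of_invariant {p : P4}
    (hp : ∀ a b, a ≠ b → substM (transvection a b 1) p - p ∈ hitSub 9) :
    tripleMatrix p ∈ alternatingMatrices (Fin 4) kk := by
  refine mem_alternatingMatrices_of_forall_transvection (by simp) fun a b hab => ?_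
  have difference_mem := tripleMatrix_mem_alternatingMatrices (hp b a hab.symm)
  rwa [map_sub, tripleMatrix_substM_transvection hab.symm] at difference_mem

theorem exists_sub_smul_symmetricNonic_mem_hitSub {p : P4} (hp : p ∈ homog 9)
    (hinv : ∀ a b, a ≠ b → substM (transvection a b 1) p - p ∈ hitSub 9) :
    ∃ d : kk, p - d • symmetricNonic ∈ hitSub 9 := by
  obtain ⟨h, hh, h_eq⟩ := exists_mem_hitSub_tripleMatrix_eq
    (tripleMatrix_mem_alternatingMatrices_of_invariant hinv)
  have hΛ : tripleMatrix (p - h) = 0 := by rw [map_sub, h_eq, sub_self]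
  have hph : p - h ∈ homog 9 := sub_mem hp (hitSub_le_homog 9 hh)
  obtain ⟨d, hd⟩ := exists_isHitFamily_sub_smul_single (m := cubicFamily (p - h)) (by simp)
    fun a b hab => (substM_transvection_sub_mem_hitSub_iff hab hph hΛ).1
      (substM_sub_mem_hitSub_of_sub_mem_hitSub (by simpa using hh) (hinv a b hab))
  refine ⟨d, ?_⟩
  have remainder_mem : p - h - d • symmetricNonic ∈ hitSub 9 := by
    rw [mem_hitSub_nine_iff_isHitFamily
      (sub_mem hph (Submodule.smul_mem _ d symmetricNonic_mem_homog))
      (by rw [map_sub, map_smul, hΛ, tripleMatrix_symmetricNonic, smul_zero, sub_zero]),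
      map_sub, map_smul, funext cubicFamily_symmetricNonic]
    exact hd
  rw [sub_right_comm] at remainder_mem
  exact (Submodule.sub_mem_iff_left _ hh).1 remainder_mem

end Invariants

section CohitClasses

theorem Qmk_eq_zero_iff {n : ℕ} {f : P4} (hf : f ∈ homog n) : Qmk n f = 0 ↔ f ∈ hitSub n := by
  have coe_toHomog : (toHomog n f : P4) = f := homogeneousComponent_eq_self hf
  rw [Qmk, LinearMap.comp_apply, Submodule.mkQ_apply, Submodule.Quotient.mk_eq_zero,
    Submodule.mem_comap, Submodule.subtype_apply, coe_toHomog]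

theorem mem_invPre_glSet_iff {n : ℕ} {f : P4} :
    f ∈ invPre n glSet ↔ f ∈ homog n ∧ ∀ M, IsUnit M → substM M f - f ∈ hitSub n := by
  simp [invPre, glSet, Submodule.mem_iInf]

theorem Qmk_q7 : Qmk 9 q7 = Qmk 9 symmetricNonic := by
  rw [← sub_eq_zero, ← map_sub,
    Qmk_eq_zero_iff (sub_mem q7_mem_homog symmetricNonic_mem_homog)]
  exact q7_sub_symmetricNonic_mem_hitSub

end CohitClasses

/-- The subspace of `GL_4(F_2)`-invariants of `Q_9` is one-dimensional, spanned by the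
class of `q7`. -/
theorem statement_7 :
    QInv 9 glSet = Submodule.span kk {Qmk 9 q7} ∧ Qmk 9 q7 ≠ 0 := by
  rw [Qmk_q7]
  refine ⟨le_antisymm ?invariant_le ?span_le, ?ne_zero⟩
  case invariant_le =>
    rintro _ ⟨f, hf, rfl⟩
    obtain ⟨hf, hinv⟩ := mem_invPre_glSet_iff.1 hf
    obtain ⟨d, hd⟩ := exists_sub_smul_symmetricNonic_mem_hitSub hf fun a b hab =>
      hinv _ (Matrix.isUnit_iff_isUnit_det _ |>.2 (by simp [Matrix.det_transvection_of_ne a b hab]))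
    have Qmk_eq : Qmk 9 f = d • Qmk 9 symmetricNonic := by
      rwa [← sub_eq_zero, ← map_smul, ← map_sub,
        Qmk_eq_zero_iff (sub_mem hf (Submodule.smul_mem _ d symmetricNonic_mem_homog))]
    exact Submodule.mem_span_singleton.2 ⟨d, Qmk_eq.symm⟩
  case span_le =>
    rw [Submodule.span_singleton_le_iff_mem]
    exact ⟨symmetricNonic, mem_invPre_glSet_iff.2 ⟨symmetricNonic_mem_homog, fun M hM =>
      substM_symmetricNonic_sub_mem_hitSub hM⟩, rfl⟩
  case ne_zero =>
    exact mt (Qmk_eq_zero_iff symmetricNonic_mem_homog).1 symmetricNonic_notMem_hitSub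

end
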